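/- arXiv:2103.07498 — 2 statements merged into one kernel-verified Lean document; each statement's English description precedes it below -/
import Mathlib

section
/- There exists a constant C > 0 such that for every integer n ≥ 2, the fourth central moment of the number of descents of a uniformly random derangement of S_n is at most C·n²; equivalently, (1/d_n) · Σ_{π derangement of {1,…,n}} (des(π) − μ_n)⁴ ≤ C · n², where μ_n is the expected number of descents of a uniformly random derangement of S_n and d_n is the number of derangements of {1,…,n}. -/
open Finset

/-- The number of descents of a permutation of `Fin n`:
positions `i` with `i+1 < n` and `π(i) > π(i+1)`. -/
def descents {n : ℕ} (π : Equiv.Perm (Fin n)) : ℕ :=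
  (Finset.univ.filter fun i : Fin n =>
    ∃ h : (i : ℕ) + 1 < n, π ⟨(i : ℕ) + 1, h⟩ < π i).card

/-- The derangements of the symmetric group `S_n`. -/
def derangementSet (n : ℕ) : Finset (Equiv.Perm (Fin n)) :=
  Finset.univ.filter fun π => ∀ i, π i ≠ i

/-- Mean number of descents of a uniformly random derangement of `S_n`. -/
noncomputable def derMean (n : ℕ) : ℝ :=
  (∑ π ∈ derangementSet n, (descents π : ℝ)) / (derangementSet n).card

/-!
Centre the descent indicators of a uniformly random permutation of `Fin (n + 1)` at `1 / 2`.
Swapping the values at positions `i` and `i + 1` negates the `i`-th centred indicator and preserves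
every indicator at a position not adjacent to `i`. Hence among the even positions, and among the odd
positions, the centred indicators behave like independent symmetric signs, and their sums have
fourth moment `O(n²)`. Passing from permutations to derangements costs at most a factor `3`, since
`n! ≤ 3 dₙ` for `n ≥ 2`, and recentring at the mean costs at most a factor `2⁴`.
-/

section Recentring

variable {ι : Type*} (s : Finset ι) (f : ι → ℝ) (c : ℝ) {p : ℕ}

theorem card_mul_mean_sub_pow_le_sum_sub_pow (hp : Even p) :
    #s * ((∑ i ∈ s, f i) / #s - c) ^ p ≤ ∑ i ∈ s, (f i - c) ^ p := by
  rcases s.eq_empty_or_nonempty with rfl | hs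
  · simp
  have card_pos : (0 : ℝ) < #s := by exact_mod_cast hs.card_pos
  have weights_sum : ∑ _i ∈ s, (#s : ℝ)⁻¹ = 1 := by
    rw [sum_const, nsmul_eq_mul, mul_inv_cancel₀ card_pos.ne']
  have mean_sub : (∑ i ∈ s, f i) / #s - c = ∑ i ∈ s, (#s : ℝ)⁻¹ * (f i - c) := by
    rw [← mul_sum, sum_sub_distrib, sum_const, nsmul_eq_mul]
    field_simp
  have jensen := Real.pow_arith_mean_le_arith_mean_pow_of_even s (fun _ => (#s : ℝ)⁻¹)
    (fun i => f i - c) (fun _ _ => by positivity) weights_sum hp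
  rwa [← mean_sub, ← mul_sum, inv_mul_eq_div, le_div_iff₀' card_pos] at jensen

theorem sum_sub_mean_pow_le (hp : Even p) :
    ∑ i ∈ s, (f i - (∑ j ∈ s, f j) / #s) ^ p ≤ 2 ^ p * ∑ i ∈ s, (f i - c) ^ p := by
  rcases eq_or_ne p 0 with rfl | hp₀
  · simp
  set m := (∑ j ∈ s, f j) / #s
  have pointwise (i : ι) : (f i - m) ^ p ≤ 2 ^ (p - 1) * ((f i - c) ^ p + (m - c) ^ p) := by
    rw [← hp.neg_pow (m - c), ← sub_add_sub_cancel (f i) c m, ← neg_sub m c]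
    exact hp.add_pow_le
  calc ∑ i ∈ s, (f i - m) ^ p
      ≤ ∑ i ∈ s, 2 ^ (p - 1) * ((f i - c) ^ p + (m - c) ^ p) :=
        sum_le_sum fun i _ => pointwise i
    _ = 2 ^ (p - 1) * (∑ i ∈ s, (f i - c) ^ p + #s * (m - c) ^ p) := by
        rw [← mul_sum, sum_add_distrib, sum_const, nsmul_eq_mul]
    _ ≤ 2 ^ (p - 1) * (∑ i ∈ s, (f i - c) ^ p + ∑ i ∈ s, (f i - c) ^ p) := by
        gcongr
        exact card_mul_mean_sub_pow_le_sum_sub_pow s f c hp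
    _ = 2 ^ p * ∑ i ∈ s, (f i - c) ^ p := by
        rw [← two_mul, ← mul_assoc, pow_sub_one_mul hp₀]

end Recentring

section Flip

variable {Ω : Type*} [Fintype Ω] {σ : Equiv.Perm Ω} {S Y : Ω → ℝ} {B : ℝ}

theorem two_mul_sum_add_pow_of_flip (hS : ∀ ω, S (σ ω) = S ω) (hY : ∀ ω, Y (σ ω) = -Y ω) (p : ℕ) :
    2 * ∑ ω, (S ω + Y ω) ^ p = ∑ ω, ((S ω + Y ω) ^ p + (S ω - Y ω) ^ p) := by
  have flipped : ∑ ω, (S ω - Y ω) ^ p = ∑ ω, (S ω + Y ω) ^ p := by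
    rw [← Equiv.sum_comp σ fun ω => (S ω + Y ω) ^ p]
    simp only [hS, hY, sub_eq_add_neg]
  rw [sum_add_distrib, flipped, two_mul]

theorem sum_add_sq_le_of_flip (hS : ∀ ω, S (σ ω) = S ω) (hY : ∀ ω, Y (σ ω) = -Y ω)
    (hB : ∀ ω, |Y ω| ≤ B) :
    ∑ ω, (S ω + Y ω) ^ 2 ≤ ∑ ω, S ω ^ 2 + Fintype.card Ω * B ^ 2 := by
  have pointwise (ω : Ω) : (S ω + Y ω) ^ 2 + (S ω - Y ω) ^ 2 ≤ 2 * (S ω ^ 2 + B ^ 2) := by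
    have Y_sq_le : Y ω ^ 2 ≤ B ^ 2 := sq_le_sq.2 ((hB ω).trans (le_abs_self B))
    linarith
  have total := sum_le_sum fun ω (_ : ω ∈ univ) => pointwise ω
  rw [← two_mul_sum_add_pow_of_flip hS hY, ← mul_sum, sum_add_distrib, sum_const, card_univ,
    nsmul_eq_mul] at total
  exact le_of_mul_le_mul_left total two_pos

theorem sum_add_pow_four_le_of_flip (hS : ∀ ω, S (σ ω) = S ω) (hY : ∀ ω, Y (σ ω) = -Y ω)
    (hB : ∀ ω, |Y ω| ≤ B) :
    ∑ ω, (S ω + Y ω) ^ 4 ≤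
      ∑ ω, S ω ^ 4 + 6 * B ^ 2 * ∑ ω, S ω ^ 2 + Fintype.card Ω * B ^ 4 := by
  have pointwise (ω : Ω) : (S ω + Y ω) ^ 4 + (S ω - Y ω) ^ 4 ≤
      2 * (S ω ^ 4 + 6 * B ^ 2 * S ω ^ 2 + B ^ 4) := by
    have Y_sq_le : Y ω ^ 2 ≤ B ^ 2 := sq_le_sq.2 ((hB ω).trans (le_abs_self B))
    calc (S ω + Y ω) ^ 4 + (S ω - Y ω) ^ 4
        = 2 * (S ω ^ 4 + 6 * Y ω ^ 2 * S ω ^ 2 + (Y ω ^ 2) ^ 2) := by ring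
      _ ≤ 2 * (S ω ^ 4 + 6 * B ^ 2 * S ω ^ 2 + (B ^ 2) ^ 2) := by gcongr
      _ = 2 * (S ω ^ 4 + 6 * B ^ 2 * S ω ^ 2 + B ^ 4) := by ring
  have total := sum_le_sum fun ω (_ : ω ∈ univ) => pointwise ω
  rw [← two_mul_sum_add_pow_of_flip hS hY, ← mul_sum, sum_add_distrib, sum_add_distrib, ← mul_sum,
    sum_const, card_univ, nsmul_eq_mul] at total
  exact le_of_mul_le_mul_left total two_pos

end Flip

/-- The functions `Y i`, for `i ∈ T`, are bounded by `B`, and each of them can be negated by a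
bijection `σ i` of `Ω` that preserves all the others. Under the uniform measure on a finite `Ω` this
replaces independence and symmetry in moment bounds for `∑ i ∈ T, Y i`. -/
structure IsFlipFamily {Ω ι : Type*} (Y : ι → Ω → ℝ) (σ : ι → Equiv.Perm Ω) (T : Finset ι)
    (B : ℝ) : Prop where
  abs_le : ∀ i ∈ T, ∀ ω, |Y i ω| ≤ B
  apply_self : ∀ i ∈ T, ∀ ω, Y i (σ i ω) = -Y i ω
  apply_of_ne : ∀ i ∈ T, ∀ j ∈ T, j ≠ i → ∀ ω, Y j (σ i ω) = Y j ω

namespace IsFlipFamily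

variable {Ω ι : Type*} {Y : ι → Ω → ℝ} {σ : ι → Equiv.Perm Ω} {T U : Finset ι} {B : ℝ}

theorem mono (h : IsFlipFamily Y σ U B) (hT : T ⊆ U) : IsFlipFamily Y σ T B where
  abs_le i hi := h.abs_le i (hT hi)
  apply_self i hi := h.apply_self i (hT hi)
  apply_of_ne i hi j hj := h.apply_of_ne i (hT hi) j (hT hj)

theorem sum_apply_of_notMem {a : ι} (ha : a ∉ T) (h : IsFlipFamily Y σ (T.cons a ha) B) (ω : Ω) :
    ∑ i ∈ T, Y i (σ a ω) = ∑ i ∈ T, Y i ω :=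
  sum_congr rfl fun i hi =>
    h.apply_of_ne a (mem_cons_self a T) i (mem_cons_of_mem hi) (ne_of_mem_of_not_mem hi ha) ω

variable [Fintype Ω]

theorem sum_sq_le (h : IsFlipFamily Y σ T B) :
    ∑ ω, (∑ i ∈ T, Y i ω) ^ 2 ≤ Fintype.card Ω * (#T * B ^ 2) := by
  induction T using Finset.cons_induction with
  | empty => simp
  | cons a T ha ih =>
    have a_mem : a ∈ T.cons a ha := mem_cons_self a T
    simp only [sum_cons, card_cons, add_comm (Y a _), Nat.cast_add_one]
    calc ∑ ω, (∑ i ∈ T, Y i ω + Y a ω) ^ 2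
        ≤ ∑ ω, (∑ i ∈ T, Y i ω) ^ 2 + Fintype.card Ω * B ^ 2 :=
          sum_add_sq_le_of_flip (h.sum_apply_of_notMem ha) (h.apply_self a a_mem) (h.abs_le a a_mem)
      _ ≤ Fintype.card Ω * (#T * B ^ 2) + Fintype.card Ω * B ^ 2 := by
          gcongr
          exact ih (h.mono (subset_cons ha))
      _ = Fintype.card Ω * ((#T + 1) * B ^ 2) := by ring

theorem sum_pow_four_le (h : IsFlipFamily Y σ T B) :
    ∑ ω, (∑ i ∈ T, Y i ω) ^ 4 ≤ Fintype.card Ω * (3 * (#T * B ^ 2) ^ 2) := by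
  induction T using Finset.cons_induction with
  | empty => simp
  | cons a T ha ih =>
    have a_mem : a ∈ T.cons a ha := mem_cons_self a T
    have hT := h.mono (subset_cons ha)
    simp only [sum_cons, card_cons, add_comm (Y a _), Nat.cast_add_one]
    calc ∑ ω, (∑ i ∈ T, Y i ω + Y a ω) ^ 4
        ≤ ∑ ω, (∑ i ∈ T, Y i ω) ^ 4 + 6 * B ^ 2 * ∑ ω, (∑ i ∈ T, Y i ω) ^ 2
            + Fintype.card Ω * B ^ 4 :=
          sum_add_pow_four_le_of_flip (h.sum_apply_of_notMem ha) (h.apply_self a a_mem)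
            (h.abs_le a a_mem)
      _ ≤ Fintype.card Ω * (3 * (#T * B ^ 2) ^ 2) + 6 * B ^ 2 * (Fintype.card Ω * (#T * B ^ 2))
            + Fintype.card Ω * (3 * B ^ 4) := by
          gcongr
          · exact ih hT
          · exact hT.sum_sq_le
          · exact le_mul_of_one_le_left (by positivity) (by norm_num)
      _ = Fintype.card Ω * (3 * ((#T + 1) * B ^ 2) ^ 2) := by ring

end IsFlipFamily

section Descents

variable {n : ℕ}

/-- The indicator of a descent of `π` at position `i`, centred at `1 / 2`. The `n` possible descent
positions of a permutation of `Fin (n + 1)` are indexed by `Fin n`, with `i` standing for the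
comparison of the values at `i.castSucc` and `i.succ`. -/
noncomputable def centredDescent (i : Fin n) (π : Equiv.Perm (Fin (n + 1))) : ℝ :=
  if π i.succ < π i.castSucc then 1 / 2 else -1 / 2

/-- The bijection of `S_{n+1}` that exchanges the values at the positions `i` and `i + 1`. -/
def adjacentSwap (i : Fin n) : Equiv.Perm (Equiv.Perm (Fin (n + 1))) :=
  Equiv.mulRight (Equiv.swap i.castSucc i.succ)

theorem abs_centredDescent (i : Fin n) (π : Equiv.Perm (Fin (n + 1))) :
    |centredDescent i π| = 1 / 2 := by
  unfold centredDescent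
  split_ifs <;> norm_num [abs_div]

theorem centredDescent_adjacentSwap_self (i : Fin n) (π : Equiv.Perm (Fin (n + 1))) :
    centredDescent i (adjacentSwap i π) = -centredDescent i π := by
  have values_ne : π i.succ ≠ π i.castSucc := π.injective.ne Fin.castSucc_lt_succ.ne'
  simp only [centredDescent, adjacentSwap, Equiv.coe_mulRight, Equiv.Perm.mul_apply,
    Equiv.swap_apply_left, Equiv.swap_apply_right]
  rcases values_ne.lt_or_gt with hlt | hgt
  · simp [hlt, hlt.not_gt, neg_div]
  · simp [hgt, hgt.not_gt, neg_div]

theorem centredDescent_adjacentSwap_of_ne {i j : Fin n} (hne : j ≠ i) (hij : (i : ℕ) + 1 ≠ j)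
    (hji : (j : ℕ) + 1 ≠ i) (π : Equiv.Perm (Fin (n + 1))) :
    centredDescent j (adjacentSwap i π) = centredDescent j π := by
  have castSucc_fixed : Equiv.swap i.castSucc i.succ j.castSucc = j.castSucc :=
    Equiv.swap_apply_of_ne_of_ne (by simpa using hne) (by simp [Fin.ext_iff, hij.symm])
  have succ_fixed : Equiv.swap i.castSucc i.succ j.succ = j.succ :=
    Equiv.swap_apply_of_ne_of_ne (by simp [Fin.ext_iff, hji]) (by simpa using hne)
  simp only [centredDescent, adjacentSwap, Equiv.coe_mulRight, Equiv.Perm.mul_apply,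
    castSucc_fixed, succ_fixed]

theorem isFlipFamily_centredDescent {T : Finset (Fin n)}
    (hT : ∀ i ∈ T, ∀ j ∈ T, (i : ℕ) + 1 ≠ j) :
    IsFlipFamily centredDescent adjacentSwap T (1 / 2) where
  abs_le i _ π := (abs_centredDescent i π).le
  apply_self i _ := centredDescent_adjacentSwap_self i
  apply_of_ne i hi j hj hne := centredDescent_adjacentSwap_of_ne hne (hT i hi j hj) (hT j hj i hi)

theorem sum_sum_centredDescent_pow_four_le {T : Finset (Fin n)}
    (hT : ∀ i ∈ T, ∀ j ∈ T, (i : ℕ) + 1 ≠ j) :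
    ∑ π, (∑ i ∈ T, centredDescent i π) ^ 4 ≤ (n + 1).factorial * (3 / 16 * (#T : ℝ) ^ 2) := by
  have moment := (isFlipFamily_centredDescent hT).sum_pow_four_le
  rw [Fintype.card_perm, Fintype.card_fin] at moment
  exact moment.trans_eq (by ring)

theorem descents_eq_card_filter (π : Equiv.Perm (Fin (n + 1))) :
    descents π = #{i : Fin n | π i.succ < π i.castSucc} := by
  rw [descents, card_filter, card_filter, Fin.sum_univ_castSucc]
  simp [Fin.succ]

theorem descents_sub_half_eq_sum_centredDescent (π : Equiv.Perm (Fin (n + 1))) :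
    (descents π : ℝ) - n / 2 = ∑ i, centredDescent i π := by
  have centred (i : Fin n) : centredDescent i π =
      (if π i.succ < π i.castSucc then 1 else 0) - 1 / 2 := by
    unfold centredDescent
    split_ifs <;> norm_num
  simp only [centred, sum_sub_distrib, sum_boole, sum_const, card_univ, Fintype.card_fin,
    nsmul_eq_mul, descents_eq_card_filter]
  ring

theorem sum_descents_sub_half_pow_four_le (n : ℕ) :
    ∑ π : Equiv.Perm (Fin (n + 1)), ((descents π : ℝ) - n / 2) ^ 4 ≤
      (n + 1).factorial * (3 * (n : ℝ) ^ 2) := by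
  set E : Finset (Fin n) := {i | Even (i : ℕ)}
  set O : Finset (Fin n) := {i | ¬Even (i : ℕ)}
  have even_nonadjacent : ∀ i ∈ E, ∀ j ∈ E, (i : ℕ) + 1 ≠ j := by
    simp only [E, mem_filter_univ]
    grind
  have odd_nonadjacent : ∀ i ∈ O, ∀ j ∈ O, (i : ℕ) + 1 ≠ j := by
    simp only [O, mem_filter_univ]
    grind
  have pointwise (π : Equiv.Perm (Fin (n + 1))) : ((descents π : ℝ) - n / 2) ^ 4 ≤
      8 * ((∑ i ∈ E, centredDescent i π) ^ 4 + (∑ i ∈ O, centredDescent i π) ^ 4) := by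
    rw [descents_sub_half_eq_sum_centredDescent,
      ← sum_filter_add_sum_filter_not univ fun i : Fin n => Even (i : ℕ)]
    exact (Even.add_pow_le (by decide)).trans_eq (by norm_num [E, O])
  calc ∑ π : Equiv.Perm (Fin (n + 1)), ((descents π : ℝ) - n / 2) ^ 4
      ≤ 8 * (∑ π, (∑ i ∈ E, centredDescent i π) ^ 4 + ∑ π, (∑ i ∈ O, centredDescent i π) ^ 4) := by
        rw [← sum_add_distrib, mul_sum]
        exact sum_le_sum fun π _ => pointwise π
    _ ≤ 8 * ((n + 1).factorial * (3 / 16 * (#E : ℝ) ^ 2) +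
          (n + 1).factorial * (3 / 16 * (#O : ℝ) ^ 2)) := by
        gcongr
        · exact sum_sum_centredDescent_pow_four_le even_nonadjacent
        · exact sum_sum_centredDescent_pow_four_le odd_nonadjacent
    _ ≤ 8 * ((n + 1).factorial * (3 / 16 * (n : ℝ) ^ 2) +
          (n + 1).factorial * (3 / 16 * (n : ℝ) ^ 2)) := by
        gcongr <;> exact card_finset_fin_le _
    _ = (n + 1).factorial * (3 * (n : ℝ) ^ 2) := by ring

theorem sum_descents_sub_mean_pow_four_le (A : Finset (Equiv.Perm (Fin (n + 1)))) :
    ∑ π ∈ A, ((descents π : ℝ) - (∑ ρ ∈ A, (descents ρ : ℝ)) / #A) ^ 4 ≤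
      48 * (n : ℝ) ^ 2 * (n + 1).factorial :=
  calc ∑ π ∈ A, ((descents π : ℝ) - (∑ ρ ∈ A, (descents ρ : ℝ)) / #A) ^ 4
      ≤ 2 ^ 4 * ∑ π ∈ A, ((descents π : ℝ) - n / 2) ^ 4 :=
        sum_sub_mean_pow_le A _ _ (by decide)
    _ ≤ 2 ^ 4 * ∑ π, ((descents π : ℝ) - n / 2) ^ 4 := by
        gcongr
        exact subset_univ A
    _ ≤ 2 ^ 4 * ((n + 1).factorial * (3 * (n : ℝ) ^ 2)) := by
        gcongr
        exact sum_descents_sub_half_pow_four_le n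
    _ = 48 * (n : ℝ) ^ 2 * (n + 1).factorial := by ring

end Descents

theorem card_derangementSet (n : ℕ) : #(derangementSet n) = numDerangements n := by
  rw [← card_derangements_fin_eq_numDerangements]
  exact (Fintype.card_of_subtype _ fun π => by simp [derangementSet, derangements]).symm

theorem factorial_le_three_mul_numDerangements :
    ∀ {n : ℕ}, n ≠ 1 → n.factorial ≤ 3 * numDerangements n
  | 0, _ | 2, _ | 3, _ => by decide
  | n + 4, _ =>
    calc (n + 4).factorial
        = (n + 3) * ((n + 2).factorial + (n + 3).factorial) := by
          simp only [Nat.factorial_succ]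
          ring
      _ ≤ (n + 3) * (3 * numDerangements (n + 2) + 3 * numDerangements (n + 3)) := by
          gcongr <;> exact factorial_le_three_mul_numDerangements (by lia)
      _ = 3 * numDerangements (n + 4) := by
          rw [numDerangements_add_two (n + 2)]
          ring

/-- The fourth central moment of the number of descents of a uniformly random derangement
of `S_n` is `O(n²)`. -/
theorem fourth_moment_descents_derangements_le :
    ∃ C : ℝ, 0 < C ∧ ∀ n : ℕ, 2 ≤ n →
      (∑ π ∈ derangementSet n, ((descents π : ℝ) - derMean n) ^ 4) /
          (derangementSet n).card ≤ C * n ^ 2 := by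
  refine ⟨144, by norm_num, fun n hn => ?_⟩
  have factorial_le : (n.factorial : ℝ) ≤ 3 * #(derangementSet n) := by
    rw [card_derangementSet]
    exact_mod_cast factorial_le_three_mul_numDerangements (by lia)
  have card_pos : (0 : ℝ) < #(derangementSet n) := by
    have : (0 : ℝ) < n.factorial := by positivity
    linarith
  obtain ⟨m, rfl⟩ : ∃ m, n = m + 1 := ⟨n - 1, by lia⟩
  rw [div_le_iff₀ card_pos]
  calc ∑ π ∈ derangementSet (m + 1), ((descents π : ℝ) - derMean (m + 1)) ^ 4
      ≤ 48 * (m : ℝ) ^ 2 * (m + 1).factorial := sum_descents_sub_mean_pow_four_le _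
    _ ≤ 48 * ((m + 1 : ℕ) : ℝ) ^ 2 * (3 * #(derangementSet (m + 1))) := by
        gcongr
        exact m.le_succ
    _ = 144 * ((m + 1 : ℕ) : ℝ) ^ 2 * #(derangementSet (m + 1)) := by ring
end

section
/- For every integer n ≥ 2, Σ_k k(k−1) · D_{n,k} = (n−2) · Σ_k k(k−1) · D_{n−1,k} + (2n−4) · Σ_k k · D_{n−1,k} + (−1)^n (n−1)(n−2), where D_{m,k} is the number of derangements of {1,…,m} with exactly k descents. -/
open Finset

/-- `D_{n,k}`: the number of derangements of `{1,…,n}` with exactly `k` descents. -/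
def derDesNat (n k : ℕ) : ℕ :=
  ((derangementSet n).filter fun π => descents π = k).card

/-!
Write `d m` for the number of derangements of `m` points. Twice the number of descents of `π`, less
the number of positions, is the sum over the positions `i` of the sign `±1` telling whether `π`
descends at `i`. The first two moments of the descent number over the derangements thus reduce to
correlations of one or two such signs.

Exchanging the values of `π` at `i` and `i + 1`, or conjugating with the transposition `(i i+1)`
when the exchange could create a fixed point, flips the sign at `i` and preserves the signs at
positions not adjacent to `i`, unless `(i i+1)` is a cycle of `π`. Only derangements containing
prescribed `2`-cycles survive this cancellation: they number `d (n - 2)` for one sign, and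
`d (n - 4)` for two signs at non-adjacent positions. For adjacent positions `i` and `i + 1`,
averaging over the six conjugates of `π` by permutations of `{i, i + 1, i + 2}` gives `-1/3`, unless
`π` has a `3`-cycle on this set, when it gives `-1`; each `3`-cycle occurs in `d (n - 3)`
derangements.

The recurrence follows from the resulting closed forms by `d (n + 1) = (n + 1) d n - (-1) ^ n`.
-/

open Equiv

section DecidableEq

variable {α : Type*} [Fintype α] [DecidableEq α]

variable (α) in
/-- The derangements of a finite type, as a finset. -/
def derangementFinset : Finset (Perm α) :=
  univ.filter (· ∈ derangements α)

lemma mem_derangementFinset {π : Perm α} : π ∈ derangementFinset α ↔ ∀ x, π x ≠ x := by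
  simp only [derangementFinset, mem_filter_univ]
  rfl

lemma conj_mem_derangementFinset (g : Perm α) {π : Perm α} (hπ : π ∈ derangementFinset α) :
    g * π * g⁻¹ ∈ derangementFinset α := by
  rw [mem_derangementFinset] at hπ ⊢
  intro x hx
  exact hπ (g⁻¹ x) (Perm.eq_inv_iff_eq.2 hx)

lemma sum_derangementFinset_conj {M : Type*} [AddCommMonoid M] (g : Perm α) (f : Perm α → M) :
    ∑ π ∈ derangementFinset α, f (g * π * g⁻¹) = ∑ π ∈ derangementFinset α, f π :=
  sum_nbij' (g * · * g⁻¹) (g⁻¹ * · * g) (fun _ => conj_mem_derangementFinset g)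
    (fun _ hπ => by simpa using conj_mem_derangementFinset g⁻¹ hπ)
    (fun _ _ => by group) (fun _ _ => by group) (fun _ _ => rfl)

lemma card_derangementFinset_filter_eqOn_support (g : Perm α) :
    #{π ∈ derangementFinset α | ∀ x ∈ g.support, π x = g x} =
      numDerangements (Fintype.card α - #g.support) := by
  have card_fixed : Fintype.card {x // g x = x} = Fintype.card α - #g.support := by
    rw [← card_compl, Fintype.card_subtype]
    congr 1
    ext x
    simp
  rw [← card_fixed, ← card_derangements_eq_numDerangements,
    Fintype.card_congr (derangements.subtypeEquiv _), Fintype.card_subtype]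
  refine card_nbij' (g⁻¹ * ·) (g * ·) ?_ ?_
    (fun _ _ => mul_inv_cancel_left g _) (fun _ _ => inv_mul_cancel_left g _) <;>
  · intro π hπ
    simp only [coe_filter, Set.mem_ofPred_eq, mem_derangementFinset, mem_univ, true_and,
      Function.mem_fixedPoints, Function.IsFixedPt, Perm.mul_apply, Perm.inv_eq_iff_eq,
      Perm.mem_support] at hπ ⊢
    grind [g.injective.eq_iff]

lemma card_derangementFinset : #(derangementFinset α) = numDerangements (Fintype.card α) := by
  simpa using card_derangementFinset_filter_eqOn_support (1 : Perm α)

variable {a b c d : α}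

lemma card_derangementFinset_filter_swap (hab : a ≠ b) :
    #{π ∈ derangementFinset α | π a = b ∧ π b = a} = numDerangements (Fintype.card α - 2) := by
  simpa [Perm.support_swap hab, card_pair hab] using
    card_derangementFinset_filter_eqOn_support (swap a b)

lemma card_derangementFinset_filter_swap_swap (h : [a, b, c, d].Nodup) :
    #{π ∈ derangementFinset α | (π a = b ∧ π b = a) ∧ π c = d ∧ π d = c} =
      numDerangements (Fintype.card α - 4) := by
  simp only [List.nodup_cons, List.mem_cons, List.not_mem_nil, or_false, not_or] at h
  obtain ⟨⟨hab, hac, had⟩, ⟨hbc, hbd⟩, hcd, -⟩ := h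
  have hsupport : (swap a b * swap c d).support = {a, b, c, d} := by
    rw [Perm.Disjoint.support_mul, Perm.support_swap hab, Perm.support_swap hcd]
    · exact insert_union _ _ _
    · rw [Perm.disjoint_iff_disjoint_support, Perm.support_swap hab, Perm.support_swap hcd]
      simp [*, Ne.symm]
  have hcard : #({a, b, c, d} : Finset α) = 4 := by
    simp [card_insert_of_notMem, *]
  have := card_derangementFinset_filter_eqOn_support (swap a b * swap c d)
  simpa [hsupport, hcard, swap_apply_of_ne_of_ne, and_assoc, *, Ne.symm] using this

lemma card_derangementFinset_filter_cycle (h : [a, b, c].Nodup) :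
    #{π ∈ derangementFinset α | π a = b ∧ π b = c ∧ π c = a} =
      numDerangements (Fintype.card α - 3) := by
  have hsupport := Perm.support_swap_mul_swap h
  simp only [List.nodup_cons, List.mem_cons, List.not_mem_nil, or_false, not_or] at h
  obtain ⟨⟨hab, hac⟩, hbc, -⟩ := h
  have hcard : #({a, b, c} : Finset α) = 3 := by
    simp [*]
  have := card_derangementFinset_filter_eqOn_support (swap a b * swap b c)
  simpa [hsupport, hcard, swap_apply_of_ne_of_ne, *, Ne.symm] using this

end DecidableEq

section ToggleOrder

variable {α : Type*} [DecidableEq α]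

/-- The permutation obtained by exchanging the values of `π` at `a` and `b`, or by conjugating `π`
with the transposition of `a` and `b` in case that exchange could create a fixed point. For
consecutive `a` and `b` it pairs off the derangements with a descent at `a` with those without,
apart from those that have `(a b)` as a cycle. -/
def toggleOrder (a b : α) (π : Perm α) : Perm α :=
  if π a = b ∨ π b = a then swap a b * π * swap a b else π * swap a b

lemma toggleOrder_swaps_iff {a b c d : α} (hac : a ≠ c) (had : a ≠ d) (hbc : b ≠ c) (hbd : b ≠ d)
    (π : Perm α) :
    (toggleOrder a b π c = d ∧ toggleOrder a b π d = c) ↔ (π c = d ∧ π d = c) := by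
  unfold toggleOrder
  split_ifs <;> simp [swap_apply_of_ne_of_ne, swap_apply_eq_iff, *, Ne.symm]

variable [Fintype α] {a b : α} {π : Perm α}

lemma toggleOrder_mem (hπ : π ∈ derangementFinset α) :
    toggleOrder a b π ∈ derangementFinset α := by
  unfold toggleOrder
  split_ifs with h
  · simpa using conj_mem_derangementFinset (swap a b) hπ
  · rw [mem_derangementFinset] at hπ ⊢
    intro x
    grind [Perm.mul_apply]

lemma toggleOrder_toggleOrder (hπ : π ∈ derangementFinset α) :
    toggleOrder a b (toggleOrder a b π) = π := by
  have hπ' := mem_derangementFinset.1 hπ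
  by_cases h : π a = b ∨ π b = a
  · simp [toggleOrder, h, swap_apply_eq_iff, or_comm, mul_assoc]
  · simp [toggleOrder, h, mul_assoc, hπ' a, hπ' b]

lemma toggleOrder_swaps_self_iff (hπ : π ∈ derangementFinset α) :
    (toggleOrder a b π a = b ∧ toggleOrder a b π b = a) ↔ (π a = b ∧ π b = a) := by
  have hπ' := mem_derangementFinset.1 hπ
  unfold toggleOrder
  split_ifs with h
  · simp [swap_apply_eq_iff, and_comm]
  · simpa [hπ' a, hπ' b] using fun ha _ => h (.inl ha)

end ToggleOrder

section LinearOrder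

variable {α : Type*} [LinearOrder α] {a b c d : α}

lemma swap_lt_swap_iff_of_covBy (hab : a ⋖ b) {x y : α} (h : ¬(x = a ∧ y = b))
    (h' : ¬(x = b ∧ y = a)) : swap a b x < swap a b y ↔ x < y := by
  have hlt := hab.lt
  have hx := hab.le_iff_lt_left (z := x)
  have hy := hab.le_iff_lt_left (z := y)
  grind

/-- The sign of a descent from `x` to `y`: `1` if `y < x`, and `-1` otherwise. -/
def descentSign (x y : α) : ℤ :=
  if y < x then 1 else -1

lemma descentSign_mul_self (x y : α) : descentSign x y * descentSign x y = 1 := by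
  unfold descentSign
  split_ifs <;> rfl

lemma descentSign_toggleOrder (hab : a ⋖ b) {π : Perm α} (h : ¬(π a = b ∧ π b = a)) :
    descentSign (toggleOrder a b π a) (toggleOrder a b π b) = -descentSign (π a) (π b) := by
  have hne : π a ≠ π b := π.injective.ne hab.ne
  have hconj (hone : π a = b ∨ π b = a) : swap a b (π a) < swap a b (π b) ↔ π a < π b :=
    swap_lt_swap_iff_of_covBy hab (by grind [hab.ne]) h
  simp only [descentSign, toggleOrder]
  split_ifs <;> grind [Perm.mul_apply]

lemma descentSign_toggleOrder_of_ne (hab : a ⋖ b) (hac : a ≠ c) (had : a ≠ d) (hbc : b ≠ c)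
    (hbd : b ≠ d) (π : Perm α) :
    descentSign (toggleOrder a b π c) (toggleOrder a b π d) = descentSign (π c) (π d) := by
  unfold toggleOrder
  split_ifs with hone
  · have hconj : swap a b (π d) < swap a b (π c) ↔ π d < π c := by
      apply swap_lt_swap_iff_of_covBy hab <;> grind [π.injective.eq_iff]
    simp [descentSign, swap_apply_of_ne_of_ne, *, Ne.symm]
  · simp [swap_apply_of_ne_of_ne, *, Ne.symm]

/-- The product of the signs of two successive steps: for distinct entries it is `1` if `x, y, z` is
monotone, and `-1` if `y` is a peak or a valley. -/
def monotoneSign (x y z : α) : ℤ :=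
  descentSign x y * descentSign y z

set_option maxHeartbeats 400000 in
-- For `x, y, z = π a, π b, π c` the summands belong to the conjugates of `π` by the permutations
-- of `{a, b, c}`. An entry outside `{a, b, c}` is fixed and lies below or above all three, so that
-- only finitely many relative orders occur.
lemma monotoneSign_add_conj (hab : a ⋖ b) (hbc : b ⋖ c) {x y z : α}
    (hne : ¬(x = a ∧ y = b ∧ z = c)) (hxy : x ≠ y) (hxz : x ≠ z) (hyz : y ≠ z) :
    let s := swap a b
    let t := swap b c
    let u := swap a c
    monotoneSign x y z + monotoneSign (s y) (s x) (s z) + monotoneSign (t x) (t z) (t y) +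
        monotoneSign (u z) (u y) (u x) + monotoneSign (s (t z)) (s (t x)) (s (t y)) +
        monotoneSign (t (s y)) (t (s z)) (t (s x)) =
      -2 - 4 * (if x = b ∧ y = c ∧ z = a then 1 else 0) -
        4 * (if x = c ∧ y = a ∧ z = b then 1 else 0) := by
  have hltab := hab.lt
  have hltbc := hbc.lt
  have position (p : α) : p < a ∨ p = a ∨ p = b ∨ p = c ∨ c < p := by
    grind [hab.le_iff_lt_left (z := p), hbc.le_iff_lt_left (z := p)]
  have outside (p : α) (hp : p < a ∨ c < p) : p ≠ a ∧ p ≠ b ∧ p ≠ c := by grind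
  simp only [monotoneSign, descentSign, swap_apply_def]
  rcases position x with hx | rfl | rfl | rfl | hx <;>
    rcases position y with hy | rfl | rfl | rfl | hy <;>
    rcases position z with hz | rfl | rfl | rfl | hz <;> grind

variable [Fintype α]

lemma sum_descentSign_mul (hab : a ⋖ b) (F : Perm α → ℤ)
    (hF : ∀ π, F (toggleOrder a b π) = F π) :
    ∑ π ∈ derangementFinset α, descentSign (π a) (π b) * F π =
      ∑ π ∈ derangementFinset α with π a = b ∧ π b = a, F π := by
  have hcancel : ∑ π ∈ derangementFinset α with ¬(π a = b ∧ π b = a),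
      descentSign (π a) (π b) * F π = 0 := by
    have hsign : ∀ π ∈ {π ∈ derangementFinset α | ¬(π a = b ∧ π b = a)},
        descentSign (toggleOrder a b π a) (toggleOrder a b π b) = -descentSign (π a) (π b) :=
      fun π hπ => descentSign_toggleOrder hab (mem_filter.1 hπ).2
    refine sum_involution (fun π _ => toggleOrder a b π) (fun π hπ => ?_) (fun π hπ h0 heq => ?_)
      (fun π hπ => ?_) (fun π hπ => toggleOrder_toggleOrder (mem_filter.1 hπ).1)
    · rw [hsign π hπ, hF]
      ring
    · have := hsign π hπ
      rw [heq, eq_comm, neg_eq_self] at this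
      exact h0 (by rw [this, zero_mul])
    · rw [mem_filter] at hπ ⊢
      exact ⟨toggleOrder_mem hπ.1, mt (toggleOrder_swaps_self_iff hπ.1).1 hπ.2⟩
  rw [← sum_filter_add_sum_filter_not _ (fun π : Perm α => π a = b ∧ π b = a), hcancel, add_zero]
  refine sum_congr rfl fun π hπ => ?_
  obtain ⟨-, ha, hb⟩ := mem_filter.1 hπ
  rw [ha, hb, descentSign, if_pos hab.lt, one_mul]

lemma sum_descentSign (hab : a ⋖ b) :
    ∑ π ∈ derangementFinset α, descentSign (π a) (π b) =
      numDerangements (Fintype.card α - 2) := by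
  simpa [card_derangementFinset_filter_swap hab.ne] using
    sum_descentSign_mul hab (fun _ => 1) (fun _ => rfl)

lemma sum_descentSign_mul_descentSign (hab : a ⋖ b) (hcd : c ⋖ d) (hac : a ≠ c) (had : a ≠ d)
    (hbc : b ≠ c) :
    ∑ π ∈ derangementFinset α, descentSign (π a) (π b) * descentSign (π c) (π d) =
      numDerangements (Fintype.card α - 4) := by
  have hbd : b ≠ d := fun h => hac (hab.unique_left (h ▸ hcd))
  have hcard : #{π ∈ derangementFinset α | (π c = d ∧ π d = c) ∧ π a = b ∧ π b = a} =
      numDerangements (Fintype.card α - 4) :=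
    card_derangementFinset_filter_swap_swap
      (by simp [hab.ne, hcd.ne, hac.symm, had.symm, hbc.symm, hbd.symm])
  calc ∑ π ∈ derangementFinset α, descentSign (π a) (π b) * descentSign (π c) (π d)
      = ∑ π ∈ derangementFinset α with π a = b ∧ π b = a, descentSign (π c) (π d) :=
        sum_descentSign_mul hab _ (descentSign_toggleOrder_of_ne hab hac had hbc hbd)
    _ = ∑ π ∈ derangementFinset α,
          descentSign (π c) (π d) * if π a = b ∧ π b = a then 1 else 0 := by
        simp [sum_filter]
    _ = ∑ π ∈ derangementFinset α with π c = d ∧ π d = c,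
          if π a = b ∧ π b = a then 1 else 0 :=
        sum_descentSign_mul hcd _ fun π => by
          simp only [toggleOrder_swaps_iff hac.symm hbc.symm had.symm hbd.symm π]
    _ = numDerangements (Fintype.card α - 4) := by
        rw [sum_boole, filter_filter, hcard]

lemma three_mul_sum_monotoneSign (hab : a ⋖ b) (hbc : b ⋖ c) :
    3 * ∑ π ∈ derangementFinset α, monotoneSign (π a) (π b) (π c) =
      -numDerangements (Fintype.card α) - 4 * numDerangements (Fintype.card α - 3) := by
  have hac : a ≠ c := (hab.lt.trans hbc.lt).ne
  have hnodup : [a, b, c].Nodup := by simp [hab.ne, hac, hbc.ne]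
  have hnodup' : [a, c, b].Nodup := by simp [hab.ne, hac, hbc.ne']
  let f (π : Perm α) : ℤ := monotoneSign (π a) (π b) (π c)
  let conj (g π : Perm α) : Perm α := g * π * g⁻¹
  let s := swap a b
  let t := swap b c
  let u := swap a c
  have haverage : ∀ π ∈ derangementFinset α,
      f π + f (conj s π) + f (conj t π) + f (conj u π) + f (conj (s * t) π) + f (conj (t * s) π) =
        -2 - 4 * (if π a = b ∧ π b = c ∧ π c = a then 1 else 0) -
          4 * (if π a = c ∧ π c = b ∧ π b = a then 1 else 0) := by
    intro π hπ
    rw [mem_derangementFinset] at hπ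
    have := monotoneSign_add_conj hab hbc (fun h => hπ a h.1) (π.injective.ne hab.ne)
      (π.injective.ne hac) (π.injective.ne hbc.ne)
    simpa [f, conj, s, t, u, swap_apply_of_ne_of_ne, hab.ne, hab.ne', hbc.ne, hbc.ne', hac,
      hac.symm, and_comm (a := π b = a)] using this
  have hsum := sum_congr rfl haverage
  simp only [sum_add_distrib, sum_sub_distrib, ← mul_sum, conj, sum_derangementFinset_conj,
    sum_boole, card_derangementFinset_filter_cycle hnodup,
    card_derangementFinset_filter_cycle hnodup', sum_const, card_derangementFinset,
    nsmul_eq_mul] at hsum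
  simp only [f] at hsum
  linarith

end LinearOrder

section Moments

variable {m : ℕ}

lemma derangementSet_eq_derangementFinset (n : ℕ) :
    derangementSet n = derangementFinset (Fin n) := by
  ext π
  simp [derangementSet, mem_derangementFinset]

lemma descents_eq_card (π : Perm (Fin (m + 1))) :
    descents π = #{i : Fin m | π i.succ < π i.castSucc} := by
  symm
  refine card_bij (fun i _ => i.castSucc) (fun i hi => ?_) (fun i _ j _ h => ?_) (fun i hi => ?_)
  · rw [mem_filter_univ] at hi ⊢
    exact ⟨i.succ.isLt, hi⟩
  · exact Fin.castSucc_injective m h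
  · obtain ⟨hlt, hdesc⟩ := (mem_filter_univ _).1 hi
    exact ⟨⟨i, Nat.lt_of_succ_lt_succ hlt⟩, (mem_filter_univ _).2 hdesc, rfl⟩

lemma descents_le (π : Perm (Fin (m + 1))) : descents π ≤ m := by
  rw [descents_eq_card]
  exact (card_le_univ _).trans_eq (Fintype.card_fin m)

lemma sum_mul_derDesNat {N : ℕ} (hN : m < N) (F : ℕ → ℤ) :
    ∑ k ∈ range N, F k * derDesNat (m + 1) k =
      ∑ π ∈ derangementFinset (Fin (m + 1)), F (descents π) := by
  rw [← derangementSet_eq_derangementFinset,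
    ← sum_fiberwise_of_maps_to' (g := descents) (t := range N)]
  · simp [derDesNat, mul_comm]
  · exact fun π _ => mem_range.2 ((descents_le π).trans_lt hN)

/-- The number of descents minus the number of ascents of `π`, that is, the centred version
`2 * descents π - m` of the descent count. -/
def descentExcess (π : Perm (Fin (m + 1))) : ℤ :=
  ∑ i : Fin m, descentSign (π i.castSucc) (π i.succ)

lemma two_mul_descents (π : Perm (Fin (m + 1))) :
    2 * (descents π : ℤ) = m + descentExcess π := by
  have hsign (i : Fin m) : descentSign (π i.castSucc) (π i.succ) =
      2 * (if π i.succ < π i.castSucc then 1 else 0) - 1 := by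
    unfold descentSign
    split_ifs <;> rfl
  simp only [descentExcess, descents_eq_card, hsign, sum_sub_distrib, ← mul_sum, sum_boole]
  simp

lemma castSucc_covBy_succ (i : Fin m) : i.castSucc ⋖ i.succ := by
  simp

lemma sum_descentExcess (m : ℕ) :
    ∑ π ∈ derangementFinset (Fin (m + 2)), descentExcess π = (m + 1) * numDerangements m := by
  simp only [descentExcess]
  rw [sum_comm]
  simp [sum_descentSign (castSucc_covBy_succ _)]

lemma sum_sum_ite_succ_eq (m : ℕ) (y : ℤ) :
    ∑ i : Fin (m + 1), ∑ j : Fin (m + 1), (if (i : ℕ) + 1 = j then y else 0) = m * y := by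
  have (i : Fin (m + 1)) (k : Fin m) : (i : ℕ) = k ↔ i = k.castSucc := by simp [Fin.ext_iff]
  rw [sum_comm, Fin.sum_univ_succ]
  simp [this]

lemma sum_sum_ite_eq_ite_adjacent (m : ℕ) (x y z : ℤ) :
    ∑ i : Fin (m + 1), ∑ j : Fin (m + 1),
        (if i = j then x else if (i : ℕ) + 1 = j ∨ (j : ℕ) + 1 = i then y else z) =
      (m + 1) * x + 2 * m * y + m * (m - 1) * z := by
  have hsplit (i j : Fin (m + 1)) :
      (if i = j then x else if (i : ℕ) + 1 = j ∨ (j : ℕ) + 1 = i then y else z) =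
        z + (if i = j then x - z else 0) + (if (i : ℕ) + 1 = j then y - z else 0) +
          (if (j : ℕ) + 1 = i then y - z else 0) := by
    split_ifs <;> grind
  simp only [hsplit, sum_add_distrib]
  rw [sum_sum_ite_succ_eq,
    sum_comm (f := fun i j : Fin (m + 1) => if (j : ℕ) + 1 = i then _ else _),
    sum_sum_ite_succ_eq]
  simp only [sum_const, card_univ, Fintype.card_fin, nsmul_eq_mul, sum_ite_eq, mem_univ, if_true]
  push_cast
  ring

lemma three_mul_sum_descentSign_mul_descentSign_fin (i j : Fin (m + 1)) :
    3 * ∑ π ∈ derangementFinset (Fin (m + 2)), descentSign (π i.castSucc) (π i.succ) *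
        descentSign (π j.castSucc) (π j.succ) =
      if i = j then 3 * (numDerangements (m + 2) : ℤ)
      else if (i : ℕ) + 1 = j ∨ (j : ℕ) + 1 = i then
        -numDerangements (m + 2) - 4 * numDerangements (m - 1)
      else 3 * numDerangements (m - 2) := by
  have hadjacent {k l : Fin (m + 1)} (hkl : (k : ℕ) + 1 = l) :
      3 * ∑ π ∈ derangementFinset (Fin (m + 2)), descentSign (π k.castSucc) (π k.succ) *
        descentSign (π l.castSucc) (π l.succ) =
      -(numDerangements (m + 2) : ℤ) - 4 * numDerangements (m - 1) := by
    have hmiddle : k.succ = l.castSucc := Fin.ext hkl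
    have := three_mul_sum_monotoneSign (castSucc_covBy_succ k)
      (hmiddle ▸ castSucc_covBy_succ l : k.succ ⋖ l.succ)
    simpa [monotoneSign, hmiddle] using this
  split_ifs with heq hadj
  · subst heq
    simp [descentSign_mul_self, card_derangementFinset]
  · obtain hij | hji := hadj
    · exact hadjacent hij
    · rw [← hadjacent hji]
      exact congrArg _ (sum_congr rfl fun _ _ => mul_comm _ _)
  · rw [sum_descentSign_mul_descentSign (castSucc_covBy_succ i) (castSucc_covBy_succ j)]
    · simp
    all_goals
      simp only [ne_eq, Fin.ext_iff, Fin.val_castSucc, Fin.val_succ] at heq ⊢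
      lia

lemma three_mul_sum_descentExcess_sq (m : ℕ) :
    3 * ∑ π ∈ derangementFinset (Fin (m + 2)), descentExcess π ^ 2 =
      (m + 1) * (3 * numDerangements (m + 2)) +
        2 * m * (-numDerangements (m + 2) - 4 * numDerangements (m - 1)) +
        m * (m - 1) * (3 * numDerangements (m - 2)) := by
  calc 3 * ∑ π ∈ derangementFinset (Fin (m + 2)), descentExcess π ^ 2
      = ∑ i : Fin (m + 1), ∑ j : Fin (m + 1), 3 * ∑ π ∈ derangementFinset (Fin (m + 2)),
          descentSign (π i.castSucc) (π i.succ) * descentSign (π j.castSucc) (π j.succ) := by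
        simp only [descentExcess, sq, sum_mul_sum]
        rw [sum_comm, mul_sum]
        refine sum_congr rfl fun i _ => ?_
        rw [sum_comm, mul_sum]
    _ = _ := by
        simp only [three_mul_sum_descentSign_mul_descentSign_fin, sum_sum_ite_eq_ite_adjacent]

-- The factors `m` and `m * (m - 1)` vanish whenever `m - 1` or `m - 2` is truncated.
lemma mul_numDerangements_sub_one (m : ℕ) :
    (m : ℤ) * numDerangements (m - 1) = numDerangements m - (-1) ^ m := by
  cases m with
  | zero => simp
  | succ m =>
    rw [Nat.add_sub_cancel, numDerangements_succ, Nat.cast_add_one]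
    ring

lemma mul_sub_one_mul_numDerangements_sub_two (m : ℕ) :
    (m : ℤ) * (m - 1) * numDerangements (m - 2) = numDerangements m + (m - 1) * (-1) ^ m := by
  cases m with
  | zero => simp
  | succ m =>
    have := mul_numDerangements_sub_one m
    rw [Nat.add_sub_add_right m 1 1, numDerangements_succ, Nat.cast_add_one, pow_succ]
    linear_combination (m + 1 : ℤ) * this

lemma two_mul_sum_descents (m : ℕ) :
    2 * ∑ π ∈ derangementFinset (Fin (m + 2)), (descents π : ℤ) =
      (m + 1) * (numDerangements (m + 2) + numDerangements m) := by
  simp only [mul_sum, two_mul_descents, sum_add_distrib, sum_descentExcess, sum_const,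
    card_derangementFinset, Fintype.card_fin, nsmul_eq_mul]
  push_cast
  ring

lemma twelve_mul_sum_descents_mul_pred (m : ℕ) :
    12 * ∑ π ∈ derangementFinset (Fin (m + 2)), (descents π : ℤ) * (descents π - 1) =
      (3 * m ^ 2 + m) * numDerangements (m + 2) + (6 * m * (m + 1) - 5) * numDerangements m +
        (3 * m + 5) * (-1) ^ m := by
  have hsquare (π : Perm (Fin (m + 2))) : 12 * ((descents π : ℤ) * (descents π - 1)) =
      3 * descentExcess π ^ 2 + 6 * m * descentExcess π + 3 * (m ^ 2 - 1) := by
    have h := two_mul_descents π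
    push_cast at h
    linear_combination (6 * descents π + 3 * descentExcess π + 3 * m - 3 : ℤ) * h
  simp only [mul_sum, hsquare, sum_add_distrib]
  simp only [← mul_sum, three_mul_sum_descentExcess_sq, sum_descentExcess, sum_const,
    card_derangementFinset, Fintype.card_fin, nsmul_eq_mul]
  linear_combination -8 * mul_numDerangements_sub_one m +
    3 * mul_sub_one_mul_numDerangements_sub_two m

end Moments

/-- `Σ_k k(k-1)·D_{n,k} = (n-2)·Σ_k k(k-1)·D_{n-1,k} + (2n-4)·Σ_k k·D_{n-1,k}
  + (-1)^n (n-1)(n-2)`. -/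
theorem sum_sq_descents_derangements_recurrence (n : ℕ) (hn : 2 ≤ n) :
    ∑ k ∈ Finset.range n, (k : ℤ) * ((k : ℤ) - 1) * derDesNat n k =
      ((n : ℤ) - 2) * ∑ k ∈ Finset.range n, (k : ℤ) * ((k : ℤ) - 1) * derDesNat (n - 1) k +
        (2 * (n : ℤ) - 4) * ∑ k ∈ Finset.range n, (k : ℤ) * derDesNat (n - 1) k +
        (-1) ^ n * ((n : ℤ) - 1) * ((n : ℤ) - 2) := by
  obtain rfl | ⟨m, rfl⟩ : n = 2 ∨ ∃ m, n = m + 3 :=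
    hn.eq_or_lt.imp Eq.symm Nat.exists_eq_add_of_le'
  · simp [sum_range_succ]
  rw [Nat.add_sub_cancel (m + 2) 1, sum_mul_derDesNat (by lia) (fun k => (k : ℤ) * (k - 1)),
    sum_mul_derDesNat (by lia) (fun k => (k : ℤ) * (k - 1)),
    sum_mul_derDesNat (by lia) (fun k => (k : ℤ))]
  have hfirst := two_mul_sum_descents m
  have hsecond := twelve_mul_sum_descents_mul_pred m
  have hsecond' := twelve_mul_sum_descents_mul_pred (m + 1)
  have d₁ := numDerangements_succ m
  have d₂ := numDerangements_succ (m + 1)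
  have d₃ := numDerangements_succ (m + 2)
  push_cast [pow_succ] at *
  apply mul_left_cancel₀ (show (12 : ℤ) ≠ 0 by norm_num)
  rw [d₃, d₂, d₁] at hsecond'
  rw [d₂, d₁] at hfirst hsecond
  linear_combination hsecond' - (m + 1 : ℤ) * hsecond - 12 * (m + 1 : ℤ) * hfirst
end
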